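/- arXiv:1905.05589 — 5 statements merged into one kernel-verified Lean document; each statement's English description precedes it below -/
import Mathlib

section
/- Let p ≥ 1, n ≥ 1 and 1 ≤ s be integers, let τ be a permutation of Fin p with c orbits, and let t_1, …, t_s be points of Fin p lying in pairwise distinct orbits of τ. Then the number of functions i : Fin p → Fin n satisfying i ∘ τ = i and i(t_1) = i(t_2) = … = i(t_s) equals n^{c − s + 1}. -/
/-- The number of orbits of a permutation `τ` of `Fin p`: the number of orbits of the
action on `Fin p` of the cyclic subgroup generated by `τ`. -/
noncomputable def Equiv.Perm.numOrbits {p : ℕ} (τ : Equiv.Perm (Fin p)) : ℕ :=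
  Nat.card (MulAction.orbitRel.Quotient (Subgroup.zpowers τ) (Fin p))

/-! A function fixed by `τ` is a function on the set of orbits of `τ`. If it takes a common value at
`s` chosen orbits, it amounts to that value together with an arbitrary function on the remaining
`c - s` orbits. -/

section

variable {α β ι : Type*}

open Classical in
/-- A function taking the same value at all points `u a` is its common value there together with
its restriction to the complement of the range of `u`. The common value is read off at an arbitrary
index. -/
noncomputable def constantAlongEquiv [Nonempty ι] (u : ι → α) :
    {f : α → β // ∀ a b, f (u a) = f (u b)} ≃ β × (↥(Set.range u)ᶜ → β) where
  toFun f := (f.1 (u (Classical.arbitrary ι)), fun x ↦ f.1 x)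
  invFun g :=
    ⟨fun x ↦ if hx : x ∈ Set.range u then g.1 else g.2 ⟨x, hx⟩, fun _ _ ↦ by simp⟩
  left_inv := by
    rintro ⟨f, hf⟩
    ext x
    by_cases hx : x ∈ Set.range u
    · obtain ⟨a, rfl⟩ := hx
      exact (dif_pos (Set.mem_range_self a)).trans (hf _ a)
    · exact dif_neg hx
  right_inv := by
    rintro ⟨b, g⟩
    refine Prod.ext (dif_pos (Set.mem_range_self _)) ?_
    ext x
    exact dif_neg x.2

theorem card_functions_constant_along [Finite α] [Nonempty ι] {u : ι → α}
    (hu : Function.Injective u) :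
    Nat.card {f : α → β // ∀ a b, f (u a) = f (u b)} =
      Nat.card β ^ (Nat.card α - Nat.card ι + 1) := by
  have card_compl_range : Nat.card ↥(Set.range u)ᶜ = Nat.card α - Nat.card ι := by
    rw [Nat.card_coe_set_eq, Set.ncard_compl, Set.ncard_range_of_injective hu]
  rw [Nat.card_congr (constantAlongEquiv u), Nat.card_prod, Nat.card_fun, card_compl_range,
    pow_succ']

theorem card_functions_le_ker_constant_along (r : Setoid α) [Finite (Quotient r)] [Nonempty ι]
    {t : ι → α} (ht : Function.Injective fun a ↦ (⟦t a⟧ : Quotient r)) :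
    Nat.card {f : α → β // r ≤ Setoid.ker f ∧ ∀ a b, f (t a) = f (t b)} =
      Nat.card β ^ (Nat.card (Quotient r) - Nat.card ι + 1) := by
  rw [← card_functions_constant_along ht]
  exact Nat.card_congr <|
    (Equiv.subtypeSubtypeEquivSubtypeInter _ fun f : α → β ↦ ∀ a b, f (t a) = f (t b)).symm.trans <|
      (Setoid.liftEquiv r).subtypeEquiv fun _ ↦ Iff.rfl

theorem orbitRel_zpowers_le_ker_iff (τ : Equiv.Perm α) (f : α → β) :
    MulAction.orbitRel (Subgroup.zpowers τ) α ≤ Setoid.ker f ↔ f ∘ τ = f := by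
  constructor
  · intro h
    ext x
    exact h ⟨⟨τ, Subgroup.mem_zpowers τ⟩, rfl⟩
  · rintro hf _ y ⟨⟨_, m, rfl⟩, rfl⟩
    -- The permutations `σ` with `f ∘ σ = f` form a stabilizer, which is closed under powers.
    have mk_mem_stabilizer : DomMulAct.mk τ ∈ MulAction.stabilizer (Equiv.Perm α)ᵈᵐᵃ f := hf
    exact congrFun (zpow_mem mk_mem_stabilizer m) y

theorem card_fixed_functions_constant_on_points_general [Fintype β] [Nonempty ι]
    (τ : Equiv.Perm α) [Finite (MulAction.orbitRel.Quotient (Subgroup.zpowers τ) α)] (t : ι → α)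
    (ht : Function.Injective fun a ↦ MulAction.orbit (Subgroup.zpowers τ) (t a)) :
    Nat.card {f : α → β // f ∘ τ = f ∧ ∀ a b, f (t a) = f (t b)} =
      Fintype.card β ^
        (Nat.card (MulAction.orbitRel.Quotient (Subgroup.zpowers τ) α) - Nat.card ι + 1) := by
  have ht_quotient : Function.Injective fun a ↦
      Quotient.mk (MulAction.orbitRel (Subgroup.zpowers τ) α) (t a) := fun a b hab ↦
    ht (MulAction.orbit_eq_iff.2 (Quotient.exact hab))
  simp_rw [← orbitRel_zpowers_le_ker_iff τ, ← Nat.card_eq_fintype_card]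
  exact card_functions_le_ker_constant_along _ ht_quotient

end

theorem card_fixed_functions_constant_on_points (p n s : ℕ) (hp : 1 ≤ p) (hn : 1 ≤ n)
    (hs : 1 ≤ s) (τ : Equiv.Perm (Fin p)) (t : Fin s → Fin p)
    (ht : ∀ a b : Fin s, a ≠ b →
      MulAction.orbit (Subgroup.zpowers τ) (t a) ≠ MulAction.orbit (Subgroup.zpowers τ) (t b)) :
    Nat.card {i : Fin p → Fin n // i ∘ τ = i ∧ ∀ a b : Fin s, i (t a) = i (t b)} =
      n ^ (τ.numOrbits - s + 1) := by
  have : Nonempty (Fin s) := ⟨⟨0, hs⟩⟩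
  simpa [Equiv.Perm.numOrbits] using
    card_fixed_functions_constant_on_points_general (β := Fin n) τ t
      fun a b ↦ not_imp_not.1 (ht a b)
end

section
/- Let p ≥ 1 and let π be a noncrossing finpartition of Fin p with |π| blocks. Then the number of orbits of the permutation γ ∘ σ_π⁻¹ of Fin p equals p + 1 − |π|. -/
/-- A finpartition of `Fin p` is noncrossing if there are no `a < b < c < d` with
`a, c` in one block and `b, d` in a different block. -/
def IsNoncrossing {p : ℕ} (π : Finpartition (Finset.univ : Finset (Fin p))) : Prop :=
  ∀ a b c d : Fin p, a < b → b < c → c < d →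
    ∀ B ∈ π.parts, ∀ B' ∈ π.parts, a ∈ B → c ∈ B → b ∈ B' → d ∈ B' → B = B'

/-- `σ` is the permutation `σ_π` associated to the finpartition `π` of `Fin p`:
each element of a block is sent to the next larger element of the same block,
and the largest element of a block is sent to the smallest element of that block. -/
def IsBlockPerm {p : ℕ} (π : Finpartition (Finset.univ : Finset (Fin p)))
    (σ : Equiv.Perm (Fin p)) : Prop :=
  ∀ B ∈ π.parts, ∀ x ∈ B, σ x ∈ B ∧
    ((∃ y ∈ B, x < y) → (x < σ x ∧ ∀ y ∈ B, x < y → σ x ≤ y)) ∧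
    ((∀ y ∈ B, y ≤ x) → ∀ y ∈ B, σ x ≤ y)

/-!
Write `τ = γ σ⁻¹`, so that `τ (σ x) = γ x`. If `τ y ≤ y` for some `y = σ x`, then, `π` being
noncrossing, no block crosses the chord from `x` to `σ x`, hence the interval `[τ y, y]` is
`τ`-invariant and `y` is the maximum of its orbit. Conversely the maximum `y` of an orbit satisfies
`τ y ≤ y`, so the orbits are counted by the `x` with `γ x ≤ σ x`. The remaining `x` are those with
`σ x ≤ x` other than the last point, and `σ x ≤ x` says that `x` is the maximum of its block.
-/

open Set

section Maxima

variable {α β : Type*} [LinearOrder α]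

theorem ncard_setOf_fiber_maximum [Finite α] (f : α → β) :
    {x | ∀ y, f y = f x → y ≤ x}.ncard = (range f).ncard := by
  refine BijOn.ncard_eq (f := f) ⟨fun x _ ↦ mem_range_self x, ?_, ?_⟩
  · intro x hx y hy hxy
    exact le_antisymm (hy x hxy) (hx y hxy.symm)
  · rintro _ ⟨a, rfl⟩
    obtain ⟨m, hm, hmax⟩ := exists_max_image {y | f y = f a} id (toFinite _) ⟨a, rfl⟩
    exact ⟨m, fun y hy ↦ hmax y (hy.trans hm), hm⟩

theorem ncard_setOf_part_maximum [Fintype α] (π : Finpartition (Finset.univ : Finset α)) :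
    {x | ∀ y, π.part y = π.part x → y ≤ x}.ncard = π.parts.card := by
  have range_part : range π.part = π.parts := by
    refine Subset.antisymm (range_subset_iff.2 fun x ↦ π.part_mem.2 (Finset.mem_univ x)) ?_
    simpa using π.part_surjOn.subset_range
  rw [ncard_setOf_fiber_maximum, range_part, ncard_coe_finset]

end Maxima

section Orbits

variable {α : Type*}

theorem orbitRel_zpowers_iff_sameCycle (τ : Equiv.Perm α) (x y : α) :
    MulAction.orbitRel (Subgroup.zpowers τ) α x y ↔ τ.SameCycle y x := by
  rw [MulAction.orbitRel_apply, MulAction.mem_orbit_iff, Subgroup.exists_zpowers]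
  rfl

theorem mem_of_sameCycle_of_mapsTo [Finite α] {τ : Equiv.Perm α} {s : Set α} {x y : α}
    (hs : MapsTo τ s s) (hx : x ∈ s) (h : τ.SameCycle x y) : y ∈ s := by
  obtain ⟨k, -, rfl⟩ := h.exists_pow_eq'
  exact hs.perm_pow k hx

variable [LinearOrder α] [Finite α]

theorem card_orbits_eq_ncard_sameCycle_maximum (τ : Equiv.Perm α) :
    Nat.card (MulAction.orbitRel.Quotient (Subgroup.zpowers τ) α) =
      {y | ∀ z, τ.SameCycle y z → z ≤ y}.ncard := by
  have card_maxima := ncard_setOf_fiber_maximum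
    (Quotient.mk (MulAction.orbitRel (Subgroup.zpowers τ) α))
  rw [range_quotient_mk, ncard_univ] at card_maxima
  simpa only [Quotient.eq, orbitRel_zpowers_iff_sameCycle] using card_maxima.symm

theorem card_orbits_eq_ncard_apply_le_self {τ : Equiv.Perm α}
    (h : ∀ y, MapsTo τ (Icc (τ y) y) (Icc (τ y) y)) :
    Nat.card (MulAction.orbitRel.Quotient (Subgroup.zpowers τ) α) = {y | τ y ≤ y}.ncard := by
  rw [card_orbits_eq_ncard_sameCycle_maximum]
  congr 1
  ext y
  constructor
  · exact fun hy ↦ hy _ (Equiv.Perm.sameCycle_apply_right.2 (.refl τ y))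
  · exact fun hy z hz ↦ (mem_of_sameCycle_of_mapsTo (h y) ⟨hy, le_rfl⟩ hz).2

end Orbits

theorem lt_finRotate_iff {n : ℕ} {x y : Fin (n + 1)} :
    y < finRotate (n + 1) x ↔ y ≤ x ∧ x ≠ Fin.last n := by
  rw [Fin.lt_def, coe_finRotate, Fin.le_def]
  split_ifs <;> grind

theorem finRotate_le_iff {n : ℕ} {x y : Fin (n + 1)} :
    finRotate (n + 1) x ≤ y ↔ x < y ∨ x = Fin.last n := by
  rw [← not_lt, lt_finRotate_iff, not_and_or, not_le, not_not]

namespace IsNoncrossing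

variable {p : ℕ} {π : Finpartition (Finset.univ : Finset (Fin p))}

theorem part_eq_part (hπ : IsNoncrossing π) {a b c d : Fin p}
    (hab : a < b) (hbc : b < c) (hcd : c < d)
    (hac : π.part a = π.part c) (hbd : π.part b = π.part d) : π.part a = π.part b :=
  hπ a b c d hab hbc hcd _ (by simp) _ (by simp) (by simp) (by simp [hac]) (by simp) (by simp [hbd])

theorem lt_of_part_eq_of_lt (hπ : IsNoncrossing π) {m l z w : Fin p}
    (hml : π.part m = π.part l) (hm : ∀ y, π.part y = π.part m → m ≤ y)
    (hz : z < m) (hwl : w ≤ l) (hw : π.part w = π.part z) : w < m := by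
  have part_ne : π.part z ≠ π.part m := fun h ↦ (hm z h).not_gt hz
  by_contra! hmw
  have hmw' : m < w := hmw.lt_of_ne (by grind)
  have hwl' : w < l := hwl.lt_of_ne (by grind)
  exact part_ne (hπ.part_eq_part hz hmw' hwl' hw.symm hml)

end IsNoncrossing

namespace IsBlockPerm

section Block

variable {p : ℕ} {π : Finpartition (Finset.univ : Finset (Fin p))} {σ : Equiv.Perm (Fin p)}
  {x y : Fin p}

theorem part_apply (hσ : IsBlockPerm π σ) (x : Fin p) : π.part (σ x) = π.part x :=
  π.part_eq_of_mem (by simp) (hσ (π.part x) (by simp) x (by simp)).1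

theorem lt_apply (hσ : IsBlockPerm π σ) (hy : π.part y = π.part x) (hxy : x < y) : x < σ x :=
  ((hσ (π.part x) (by simp) x (by simp)).2.1 ⟨y, by simp [← hy], hxy⟩).1

theorem apply_le_of_lt (hσ : IsBlockPerm π σ) (hy : π.part y = π.part x) (hxy : x < y) :
    σ x ≤ y :=
  ((hσ (π.part x) (by simp) x (by simp)).2.1 ⟨y, by simp [← hy], hxy⟩).2 y (by simp [← hy]) hxy

theorem apply_le_of_forall_le (hσ : IsBlockPerm π σ) (hx : ∀ z, π.part z = π.part x → z ≤ x)
    (hy : π.part y = π.part x) : σ x ≤ y :=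
  (hσ (π.part x) (by simp) x (by simp)).2.2
    (fun z hz ↦ hx z (π.part_eq_of_mem (by simp) hz)) y (by simp [← hy])

theorem apply_le_self_iff (hσ : IsBlockPerm π σ) :
    σ x ≤ x ↔ ∀ y, π.part y = π.part x → y ≤ x := by
  refine ⟨fun hx y hy ↦ ?_, fun hx ↦ hσ.apply_le_of_forall_le hx rfl⟩
  by_contra! hxy
  exact (hσ.lt_apply hy hxy).not_ge hx

theorem ncard_setOf_apply_le_self (hσ : IsBlockPerm π σ) : {x | σ x ≤ x}.ncard = π.parts.card := by
  simp only [hσ.apply_le_self_iff, ncard_setOf_part_maximum]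

theorem mem_Ioo_of_part_eq (hσ : IsBlockPerm π σ) (hπ : IsNoncrossing π) {z w : Fin p}
    (hz : z ∈ Ioo x (σ x)) (hw : π.part w = π.part z) : w ∈ Ioo x (σ x) := by
  obtain ⟨hxz, hzx⟩ := hz
  have hσx := hσ.part_apply x
  have part_ne : π.part z ≠ π.part x := fun h ↦ (hσ.apply_le_of_lt h hxz).not_gt hzx
  constructor
  · by_contra! hwx
    have hwx' : w < x := hwx.lt_of_ne (by grind)
    exact part_ne (hw.symm.trans (hπ.part_eq_part hwx' hxz hzx hw hσx.symm))
  · by_contra! hxw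
    have hxw' : σ x < w := hxw.lt_of_ne (by grind)
    exact part_ne (hπ.part_eq_part hxz hzx hxw' hσx.symm hw.symm).symm

end Block

section FinRotate

variable {n : ℕ} {π : Finpartition (Finset.univ : Finset (Fin (n + 1)))}
  {σ : Equiv.Perm (Fin (n + 1))}

theorem lt_apply_last_of_part_eq (hσ : IsBlockPerm π σ) (hπ : IsNoncrossing π)
    {z w : Fin (n + 1)} (hz : z < σ (Fin.last n)) (hw : π.part w = π.part z) :
    w < σ (Fin.last n) :=
  hπ.lt_of_part_eq_of_lt (hσ.part_apply _)
    (fun _ hy ↦ hσ.apply_le_of_forall_le (fun y _ ↦ y.le_last) (hy.trans (hσ.part_apply _)))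
    hz w.le_last hw

theorem finRotate_mem_Icc (hσ : IsBlockPerm π σ) (hπ : IsNoncrossing π) {x w : Fin (n + 1)}
    (hw : σ w ∈ Icc (finRotate (n + 1) x) (σ x)) :
    finRotate (n + 1) w ∈ Icc (finRotate (n + 1) x) (σ x) := by
  obtain hwx | hwx := hw.2.eq_or_lt
  · rw [σ.injective hwx]
    exact ⟨le_rfl, hw.1.trans hw.2⟩
  obtain rfl | hx_last := eq_or_ne x (Fin.last n)
  · have hw_lt : w < σ (Fin.last n) := hσ.lt_apply_last_of_part_eq hπ hwx (hσ.part_apply w).symm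
    exact ⟨finRotate_last.trans_le (Fin.zero_le _), finRotate_le_iff.2 (.inl hw_lt)⟩
  · have hxw : x < σ w := (finRotate_le_iff.1 hw.1).resolve_right hx_last
    have hw_mem : w ∈ Ioo x (σ x) := hσ.mem_Ioo_of_part_eq hπ ⟨hxw, hwx⟩ (hσ.part_apply w).symm
    have hw_last : w ≠ Fin.last n := Fin.ne_last_of_lt hw_mem.2
    exact ⟨finRotate_le_iff.2 (.inl (lt_finRotate_iff.2 ⟨hw_mem.1.le, hw_last⟩)),
      finRotate_le_iff.2 (.inl hw_mem.2)⟩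

theorem mapsTo_finRotate_mul_inv_Icc (hσ : IsBlockPerm π σ) (hπ : IsNoncrossing π)
    (y : Fin (n + 1)) :
    MapsTo (finRotate (n + 1) * σ⁻¹) (Icc ((finRotate (n + 1) * σ⁻¹) y) y)
      (Icc ((finRotate (n + 1) * σ⁻¹) y) y) := by
  intro z hz
  simpa using hσ.finRotate_mem_Icc hπ (x := σ⁻¹ y) (w := σ⁻¹ z) (by simpa using hz)

theorem ncard_setOf_finRotate_le_apply (hσ : IsBlockPerm π σ) :
    {x | finRotate (n + 1) x ≤ σ x}.ncard = n + 2 - π.parts.card := by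
  have compl_eq : {x | finRotate (n + 1) x ≤ σ x}ᶜ = {x | σ x ≤ x} \ {Fin.last n} := by
    ext x
    exact not_le.trans lt_finRotate_iff
  have card_compl := ncard_sdiff_singleton_add_one
    (show Fin.last n ∈ {x | σ x ≤ x} from Fin.le_last _)
  have card_add := ncard_add_ncard_compl {x | finRotate (n + 1) x ≤ σ x}
  rw [hσ.ncard_setOf_apply_le_self] at card_compl
  rw [compl_eq, Nat.card_fin] at card_add
  omega

end FinRotate

end IsBlockPerm

theorem numOrbits_finRotate_mul_inv_blockPerm (p : ℕ) (hp : 1 ≤ p)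
    (π : Finpartition (Finset.univ : Finset (Fin p))) (hπ : IsNoncrossing π)
    (σ : Equiv.Perm (Fin p)) (hσ : IsBlockPerm π σ) :
    (finRotate p * σ⁻¹).numOrbits = p + 1 - π.parts.card := by
  obtain ⟨n, rfl⟩ := Nat.exists_eq_add_of_le' hp
  calc (finRotate (n + 1) * σ⁻¹).numOrbits
      = {y | (finRotate (n + 1) * σ⁻¹) y ≤ y}.ncard :=
        card_orbits_eq_ncard_apply_le_self (hσ.mapsTo_finRotate_mul_inv_Icc hπ)
    _ = (σ ⁻¹' {y | (finRotate (n + 1) * σ⁻¹) y ≤ y}).ncard :=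
        (ncard_preimage_of_injective_subset_range σ.injective (by simp)).symm
    _ = {x | finRotate (n + 1) x ≤ σ x}.ncard := by simp
    _ = n + 1 + 1 - π.parts.card := hσ.ncard_setOf_finRotate_le_apply
end

section
/- Let p_1, …, p_s be positive integers with sum p, and let π be a noncrossing finpartition of Fin p. Then the join π ⊔ γ_{(p_1,…,p_s)} in the lattice of finpartitions of Fin p is the one-block partition ⊤ if and only if the s points 0, p_1, p_1 + p_2, …, p_1 + … + p_{s−1} of Fin p lie in pairwise distinct orbits of the permutation γ ∘ σ_π⁻¹. -/
/-- The index of the interval (among the consecutive intervals of lengths `q 0, q 1, …`)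
containing `k : Fin p`: the number of prefix sums `q 0 + ⋯ + q i` which are `≤ k`. -/
def intervalIdx {s : ℕ} (q : Fin s → ℕ) {p : ℕ} (k : Fin p) : ℕ :=
  (Finset.univ.filter fun i : Fin s =>
    ∑ j ∈ Finset.univ.filter fun j : Fin s => j ≤ i, q j ≤ (k : ℕ)).card

/-- The interval finpartition `γ_{(q 0, …, q (s-1))}` of `Fin p`, whose blocks are the
consecutive intervals of lengths `q 0`, `q 1`, …, `q (s-1)` (when `∑ i, q i = p` and
all `q i ≥ 1`). -/
def intervalPart (p : ℕ) {s : ℕ} (q : Fin s → ℕ) :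
    Finpartition (Finset.univ : Finset (Fin p)) :=
  letI : DecidableRel ⇑(Setoid.ker (intervalIdx q (p := p))) := fun x y =>
    inferInstanceAs (Decidable (intervalIdx q x = intervalIdx q y))
  Finpartition.ofSetoid (Setoid.ker (intervalIdx q))

/-!
A family of partitions has join `⊤` iff every colouring that is constant on all of their blocks is
constant. Write `τ = γ ∘ σ_π⁻¹`, and let the cut at `x` separate the elements `< x` from those
`≥ x`.

Since `π` is noncrossing, for `u` and `v` in one block of `π` the cuts at `x` and at `τ x` either
both separate `u` from `v` or both do not. So if two of the given points lie in one `τ`-orbit, the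
colouring `u ↦ (u < t a ↔ u < t b)` is constant on the blocks of `π`; it is constant on the
intervals as well, yet `t a` and `t b` get different colours.

Conversely, a colouring that is constant on the blocks of both partitions can change along a step
`x ↦ τ x` only if `τ x` is one of the given points. A nonconstant colouring changes somewhere, and
as the `τ`-orbit in question is a closed walk it changes there a second time, which produces two of
the given points in the same orbit.
-/

section Finpartition

variable {α β : Type*} [Fintype α] [DecidableEq α]

theorem finpartition_le_iff_factorsThrough_part {P R : Finpartition (Finset.univ : Finset α)} :
    P ≤ R ↔ R.part.FactorsThrough P.part := by
  constructor
  · intro hPR u v huv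
    obtain ⟨C, hC, hsub⟩ := hPR (P.part_mem.2 (Finset.mem_univ v))
    have hu : u ∈ C := hsub (huv ▸ P.mem_part (Finset.mem_univ u))
    have hv : v ∈ C := hsub (P.mem_part (Finset.mem_univ v))
    rw [R.part_eq_of_mem hC hu, R.part_eq_of_mem hC hv]
  · intro hfac B hB
    obtain ⟨u, hu⟩ := P.nonempty_of_mem_parts hB
    refine ⟨R.part u, R.part_mem.2 (Finset.mem_univ u), fun v hv => ?_⟩
    rw [R.mem_part_iff_part_eq_part (Finset.mem_univ v) (Finset.mem_univ u)]
    exact hfac ((P.part_eq_of_mem hB hv).trans (P.part_eq_of_mem hB hu).symm)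

theorem part_top_eq_part_top (u v : α) :
    (⊤ : Finpartition (Finset.univ : Finset α)).part u =
      (⊤ : Finpartition (Finset.univ : Finset α)).part v :=
  Finpartition.parts_top_subsingleton _ ((Finpartition.part_mem _).2 (Finset.mem_univ u))
    ((Finpartition.part_mem _).2 (Finset.mem_univ v))

theorem part_ofSetoid_ker_eq_iff {c : α → β} {_ : DecidableRel (Setoid.ker c).r} {u v : α} :
    (Finpartition.ofSetoid (Setoid.ker c)).part u = (Finpartition.ofSetoid (Setoid.ker c)).part v ↔
      c u = c v := by
  rw [← Finpartition.mem_part_iff_part_eq_part _ (Finset.mem_univ u) (Finset.mem_univ v),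
    Finpartition.mem_part_ofSetoid_iff_rel]
  exact eq_comm

theorem isLUB_finpartition_top_iff {S : Set (Finpartition (Finset.univ : Finset α))} :
    IsLUB S ⊤ ↔
      ∀ c : α → Prop, (∀ P ∈ S, c.FactorsThrough P.part) → ∀ u v, c u = c v := by
  classical
  constructor
  · intro hlub c hc u v
    have hub : Finpartition.ofSetoid (Setoid.ker c) ∈ upperBounds S := fun P hP =>
      finpartition_le_iff_factorsThrough_part.2 fun _ _ h =>
        part_ofSetoid_ker_eq_iff.2 (hc P hP h)
    exact part_ofSetoid_ker_eq_iff.1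
      (finpartition_le_iff_factorsThrough_part.1 (hlub.2 hub) (part_top_eq_part_top u v))
  · intro hconst
    refine ⟨fun _ _ => le_top, fun R hR => ?_⟩
    refine finpartition_le_iff_factorsThrough_part.2 fun u v _ => ?_
    have hblock : ∀ P ∈ S, Function.FactorsThrough (fun w => R.part w = R.part v) P.part :=
      fun P hP w w' h => by
        simp only [finpartition_le_iff_factorsThrough_part.1 (hR hP) h]
    exact (hconst _ hblock u v).mpr rfl

end Finpartition

section Cycle

variable {α β : Type*} {τ : Equiv.Perm α} {c : α → β} {x y : α}

theorem orbit_zpowers_eq_iff_sameCycle :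
    MulAction.orbit (Subgroup.zpowers τ) x = MulAction.orbit (Subgroup.zpowers τ) y ↔
      τ.SameCycle x y := by
  rw [MulAction.orbit_eq_iff, Equiv.Perm.sameCycle_comm]
  exact Subgroup.exists_zpowers

theorem apply_eq_of_sameCycle (hc : ∀ x, c (τ x) = c x) (hxy : τ.SameCycle x y) : c x = c y := by
  obtain ⟨n, rfl⟩ := hxy
  induction n with
  | zero => rfl
  | succ n ih => rw [ih, zpow_add_one, (Commute.zpow_self τ n).eq, Equiv.Perm.mul_apply, hc]
  | pred n ih =>
    rw [ih, ← hc ((τ ^ (-(n : ℤ) - 1)) x), ← Equiv.Perm.mul_apply, mul_self_zpow, sub_add_cancel]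

theorem exists_ne_sameCycle_apply_ne [Finite α] (hx : c (τ x) ≠ c x) :
    ∃ y ≠ x, τ.SameCycle x y ∧ c (τ y) ≠ c y := by
  by_contra! hunique
  have hconst : ∀ n : ℕ, c ((τ ^ (n + 1)) x) = c (τ x) := by
    intro n
    induction n with
    | zero => simp only [zero_add, pow_one]
    | succ n ih =>
      rw [pow_succ', Equiv.Perm.mul_apply]
      by_cases hreturn : (τ ^ (n + 1)) x = x
      · rw [hreturn]
      · rw [hunique _ hreturn ⟨(n + 1 : ℕ), by rw [zpow_natCast]⟩, ih]
  apply hx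
  rw [← hconst (orderOf τ - 1), Nat.sub_add_cancel (orderOf_pos τ), pow_orderOf_eq_one,
    Equiv.Perm.one_apply]

end Cycle

section Rotation

variable {p : ℕ} {β : Type*} {c : Fin p → β}

theorem sameCycle_finRotate (x y : Fin p) : (finRotate p).SameCycle x y := by
  rcases lt_or_ge p 2 with hp | hp
  · have : Subsingleton (Fin p) := Fin.subsingleton_iff_le_one.2 (by omega)
    rw [Subsingleton.elim x y]
  · have hmoved : ∀ z, finRotate p z ≠ z := fun z =>
      Equiv.Perm.mem_support.1 (support_finRotate_of_le hp ▸ Finset.mem_univ z)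
    exact (isCycle_finRotate_of_le hp).sameCycle (hmoved x) (hmoved y)

theorem exists_apply_finRotate_ne {u v : Fin p} (huv : c u ≠ c v) :
    ∃ z, c (finRotate p z) ≠ c z := by
  by_contra! hconst
  exact huv (apply_eq_of_sameCycle hconst (sameCycle_finRotate u v))

theorem exists_ne_sameCycle_apply_finRotate_ne {σ : Equiv.Perm (Fin p)} (hσ : ∀ x, c (σ x) = c x)
    {u v : Fin p} (huv : c u ≠ c v) :
    ∃ z w, z ≠ w ∧ (finRotate p * σ⁻¹).SameCycle (finRotate p z) (finRotate p w) ∧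
      c (finRotate p z) ≠ c z ∧ c (finRotate p w) ≠ c w := by
  set τ := finRotate p * σ⁻¹
  have hτ : ∀ z, τ (σ z) = finRotate p z := fun z => by simp [τ]
  obtain ⟨z, hz⟩ := exists_apply_finRotate_ne huv
  obtain ⟨y, hyz, hcycle, hy⟩ :=
    exists_ne_sameCycle_apply_ne (τ := τ) (c := c) (x := σ z) (by rwa [hτ, hσ])
  obtain ⟨w, rfl⟩ := σ.surjective y
  rw [hτ, hσ] at hy
  refine ⟨z, w, fun h => hyz (h ▸ rfl), ?_, hz, hy⟩
  rwa [← hτ, ← hτ, Equiv.Perm.sameCycle_apply_left, Equiv.Perm.sameCycle_apply_right]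

end Rotation

/-- `u` and `v` lie on the same side of the cut at `x`, which separates the elements `< x` from the
elements `≥ x`. -/
def SameSide {α : Type*} [LT α] (x u v : α) : Prop :=
  u < x ↔ v < x

theorem sameSide_finRotate_iff {p : ℕ} {y u v : Fin p} :
    SameSide (finRotate p y) u v ↔ (u ≤ y ↔ v ≤ y) := by
  obtain ⟨n, rfl⟩ : ∃ n, p = n + 1 := Nat.exists_eq_add_one.2 y.pos
  rcases eq_or_ne y (Fin.last n) with rfl | hy
  · simp [SameSide, Fin.le_last]
  · simp only [SameSide, Fin.lt_def, coe_finRotate_of_ne_last hy, Fin.le_def, Nat.lt_succ_iff]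

section NoncrossingPartition

variable {p : ℕ} {π : Finpartition (Finset.univ : Finset (Fin p))} {σ : Equiv.Perm (Fin p)}

theorem IsNoncrossing.sameSide_iff_sameSide (hπ : IsNoncrossing π) {B B' : Finset (Fin p)}
    (hB : B ∈ π.parts) (hB' : B' ∈ π.parts) (hne : B ≠ B') {x y u v : Fin p}
    (hx : x ∈ B) (hy : y ∈ B) (hu : u ∈ B') (hv : v ∈ B') :
    SameSide x u v ↔ SameSide y u v := by
  have hdisjoint : ∀ a ∈ B, ∀ b ∈ B', a ≠ b := fun a ha b hb hab =>
    hne (π.eq_of_mem_parts hB hB' ha (hab ▸ hb))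
  have hcross : ∀ a ∈ B, ∀ b ∈ B', ∀ a' ∈ B, ∀ b' ∈ B', a < b → b < a' → ¬ a' < b' :=
    fun a ha b hb a' ha' b' hb' h₁ h₂ h₃ =>
      hne (hπ a b a' b' h₁ h₂ h₃ B hB B' hB' ha ha' hb hb')
  have hcross' : ∀ b ∈ B', ∀ a ∈ B, ∀ b' ∈ B', ∀ a' ∈ B, b < a → a < b' → ¬ b' < a' :=
    fun b hb a ha b' hb' a' ha' h₁ h₂ h₃ =>
      hne (hπ b a b' a' h₁ h₂ h₃ B' hB' B hB hb hb' ha ha').symm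
  simp only [SameSide]
  grind

theorem IsBlockPerm.part_apply_s3 (hσ : IsBlockPerm π σ) (x : Fin p) : π.part (σ x) = π.part x :=
  π.part_eq_of_mem (π.part_mem.2 (Finset.mem_univ x))
    (hσ _ (π.part_mem.2 (Finset.mem_univ x)) x (π.mem_part (Finset.mem_univ x))).1

theorem IsBlockPerm.sameSide_apply_iff (hσ : IsBlockPerm π σ) {B : Finset (Fin p)}
    (hB : B ∈ π.parts) {y u v : Fin p} (hy : y ∈ B) (hu : u ∈ B) (hv : v ∈ B) :
    SameSide (σ y) u v ↔ (u ≤ y ↔ v ≤ y) := by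
  obtain ⟨-, hnext, hmin⟩ := hσ B hB y hy
  by_cases hlarger : ∃ w ∈ B, y < w
  · obtain ⟨hlt, hle⟩ := hnext hlarger
    have hbelow : ∀ w ∈ B, (w < σ y ↔ w ≤ y) := fun w hw =>
      ⟨fun h => not_lt.1 fun hyw => (hle w hw hyw).not_gt h, fun h => h.trans_lt hlt⟩
    rw [SameSide, hbelow u hu, hbelow v hv]
  · push Not at hlarger
    simp only [SameSide, (hmin hlarger _ hu).not_gt, (hmin hlarger _ hv).not_gt, hlarger u hu,
      hlarger v hv]

theorem IsNoncrossing.sameSide_finRotate_mul_inv_iff (hπ : IsNoncrossing π)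
    (hσ : IsBlockPerm π σ) {u v : Fin p} (huv : π.part u = π.part v) (x : Fin p) :
    SameSide ((finRotate p * σ⁻¹) x) u v ↔ SameSide x u v := by
  obtain ⟨y, rfl⟩ := σ.surjective x
  rw [Equiv.Perm.mul_apply, Equiv.Perm.inv_def, Equiv.symm_apply_apply]
  have hy : y ∈ π.part y := π.mem_part (Finset.mem_univ y)
  have hu : u ∈ π.part u := π.mem_part (Finset.mem_univ u)
  have hv : v ∈ π.part u := huv ▸ π.mem_part (Finset.mem_univ v)
  have hB : π.part y ∈ π.parts := π.part_mem.2 (Finset.mem_univ y)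
  rw [sameSide_finRotate_iff]
  by_cases hyu : π.part y = π.part u
  · exact (hσ.sameSide_apply_iff hB hy (hyu ▸ hu) (hyu ▸ hv)).symm
  · have hσy : σ y ∈ π.part y := (hσ _ hB y hy).1
    have hne : ∀ w ∈ π.part u, w ≠ y := by
      rintro w hw rfl
      exact hyu (π.part_eq_of_mem (π.part_mem.2 (Finset.mem_univ u)) hw)
    rw [hπ.sameSide_iff_sameSide hB (π.part_mem.2 (Finset.mem_univ u)) hyu hσy hy hu hv, SameSide,
      (hne u hu).le_iff_lt, (hne v hv).le_iff_lt]

theorem IsNoncrossing.factorsThrough_part_of_sameCycle (hπ : IsNoncrossing π)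
    (hσ : IsBlockPerm π σ) {x y : Fin p} (hxy : (finRotate p * σ⁻¹).SameCycle x y) :
    Function.FactorsThrough (fun u => (u < x ↔ u < y)) π.part := by
  intro u v huv
  have hside : SameSide x u v = SameSide y u v :=
    apply_eq_of_sameCycle (c := (SameSide · u v))
      (fun z => propext (hπ.sameSide_finRotate_mul_inv_iff hσ huv z)) hxy
  simp only [SameSide, eq_iff_iff] at hside ⊢
  tauto

end NoncrossingPartition

theorem card_filter_le_eq_card_filter_le_iff {ι α : Type*} [Fintype ι] [LinearOrder α] (f : ι → α)
    (x y : α) :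
    (Finset.univ.filter (f · ≤ x)).card = (Finset.univ.filter (f · ≤ y)).card ↔
      ∀ i, f i ≤ x ↔ f i ≤ y := by
  wlog hxy : x ≤ y generalizing x y
  · rw [eq_comm, this y x (le_of_not_ge hxy)]
    simp only [iff_comm]
  have hsub : Finset.univ.filter (f · ≤ x) ⊆ Finset.univ.filter (f · ≤ y) :=
    Finset.monotone_filter_right _ fun _ _ h => h.trans hxy
  rw [← (Finset.card_le_card hsub).ge_iff_eq, Finset.eq_iff_card_le_of_subset hsub,
    Finset.filter_inj']
  simp only [Finset.mem_univ, true_imp_iff]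

section IntervalPartition

variable {s p : ℕ} {q : Fin s → ℕ} {t : Fin s → Fin p}

theorem part_intervalPart_eq_iff {u v : Fin p} :
    (intervalPart p q).part u = (intervalPart p q).part v ↔ intervalIdx q u = intervalIdx q v :=
  part_ofSetoid_ker_eq_iff

theorem intervalIdx_eq_iff_forall_sameSide (hsum : ∑ i, q i = p)
    (ht : ∀ a, (t a : ℕ) = ∑ j ∈ Finset.univ.filter (· < a), q j) {u v : Fin p} :
    intervalIdx q u = intervalIdx q v ↔ ∀ a, SameSide (t a) u v := by
  rw [intervalIdx, intervalIdx, card_filter_le_eq_card_filter_le_iff]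
  cases s with
  | zero => simp only [IsEmpty.forall_iff]
  | succ n =>
    have hfirst : SameSide (t 0) u v := by simp [SameSide, Fin.lt_def, ht]
    have hlast : ∑ j ∈ Finset.univ.filter (· ≤ Fin.last n), q j = p := by simp [Fin.le_last, hsum]
    have hsucc : ∀ i : Fin n, ∑ j ∈ Finset.univ.filter (· ≤ i.castSucc), q j = t i.succ := by
      simp only [ht, Fin.le_castSucc_iff, implies_true]
    rw [Fin.forall_fin_succ', Fin.forall_fin_succ, hlast,
      and_iff_left (iff_of_false u.2.not_ge v.2.not_ge), and_iff_right hfirst]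
    simp only [hsucc, Fin.val_fin_le, SameSide, ← not_le, not_iff_not]

theorem factorsThrough_part_intervalPart (hsum : ∑ i, q i = p)
    (ht : ∀ a, (t a : ℕ) = ∑ j ∈ Finset.univ.filter (· < a), q j) (a b : Fin s) :
    Function.FactorsThrough (fun u => (u < t a ↔ u < t b)) (intervalPart p q).part := by
  intro u v huv
  have hside : ∀ a, (u < t a ↔ v < t a) :=
    (intervalIdx_eq_iff_forall_sameSide hsum ht).1 (part_intervalPart_eq_iff.1 huv)
  simp only [hside]

theorem cutPoint_injective (hq : ∀ i, 1 ≤ q i)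
    (ht : ∀ a, (t a : ℕ) = ∑ j ∈ Finset.univ.filter (· < a), q j) : Function.Injective t := by
  refine StrictMono.injective fun a b hab => ?_
  rw [Fin.lt_def, ht, ht]
  refine Finset.sum_lt_sum_of_subset (i := a) ?_ (by simpa using hab) (by simp) (hq a) (by simp)
  exact Finset.monotone_filter_right _ fun _ _ h => h.trans hab

theorem exists_eq_finRotate_of_intervalIdx_ne (hsum : ∑ i, q i = p)
    (ht : ∀ a, (t a : ℕ) = ∑ j ∈ Finset.univ.filter (· < a), q j) {z : Fin p}
    (hz : intervalIdx q (finRotate p z) ≠ intervalIdx q z) : ∃ a, t a = finRotate p z := by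
  rw [Ne, intervalIdx_eq_iff_forall_sameSide hsum ht, not_forall] at hz
  obtain ⟨a, ha⟩ := hz
  obtain ⟨n, rfl⟩ : ∃ n, p = n + 1 := Nat.exists_eq_add_one.2 z.pos
  rcases eq_or_ne z (Fin.last n) with rfl | hlast
  · exact ⟨⟨0, a.pos⟩, Fin.ext (by simp [ht, Fin.lt_def])⟩
  · have hrot : (finRotate (n + 1) z : ℕ) = z + 1 := coe_finRotate_of_ne_last hlast
    refine ⟨a, Fin.ext ?_⟩
    rw [SameSide, Fin.lt_def, Fin.lt_def, hrot] at ha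
    omega

end IntervalPartition

theorem join_eq_top_iff_distinct_orbits (s p : ℕ) (hs : 1 ≤ s) (q : Fin s → ℕ)
    (hq : ∀ i, 1 ≤ q i) (hsum : ∑ i, q i = p)
    (π : Finpartition (Finset.univ : Finset (Fin p))) (hπ : IsNoncrossing π)
    (σ : Equiv.Perm (Fin p)) (hσ : IsBlockPerm π σ)
    (t : Fin s → Fin p)
    (ht : ∀ a : Fin s, (t a : ℕ) = ∑ j ∈ Finset.univ.filter fun j : Fin s => j < a, q j) :
    IsLUB ({π, intervalPart p q} : Set (Finpartition (Finset.univ : Finset (Fin p)))) ⊤ ↔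
      ∀ a b : Fin s, a ≠ b →
        MulAction.orbit (Subgroup.zpowers (finRotate p * σ⁻¹)) (t a) ≠
          MulAction.orbit (Subgroup.zpowers (finRotate p * σ⁻¹)) (t b) := by
  simp only [isLUB_finpartition_top_iff, Set.forall_mem_insert, Set.mem_singleton_iff, forall_eq,
    ne_eq, orbit_zpowers_eq_iff_sameCycle]
  constructor
  · intro hconst a b hab hcycle
    have hcolour : (t a < t a ↔ t a < t b) = (t b < t a ↔ t b < t b) :=
      hconst (fun u => (u < t a ↔ u < t b))
        ⟨hπ.factorsThrough_part_of_sameCycle hσ hcycle,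
          factorsThrough_part_intervalPart hsum ht a b⟩ (t a) (t b)
    have htab : t a = t b := by grind
    exact hab (cutPoint_injective hq ht htab)
  · rintro hdistinct c ⟨hcπ, hcq⟩ u v
    by_contra huv
    obtain ⟨z, w, hzw, hcycle, hz, hw⟩ :=
      exists_ne_sameCycle_apply_finRotate_ne (fun x => hcπ (hσ.part_apply_s3 x)) huv
    have hcut : ∀ y, c (finRotate p y) ≠ c y → ∃ a, t a = finRotate p y := fun y hy =>
      exists_eq_finRotate_of_intervalIdx_ne hsum ht fun h =>
        hy (hcq (part_intervalPart_eq_iff.2 h))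
    obtain ⟨a, ha⟩ := hcut z hz
    obtain ⟨b, hb⟩ := hcut w hw
    refine hdistinct a b ?_ (by rwa [ha, hb])
    rintro rfl
    exact hzw ((finRotate p).injective (ha.symm.trans hb))
end

section
/- Let p_1, …, p_s be positive integers with sum p, let n ≥ 1, and let π be a noncrossing finpartition of Fin p such that the join π ⊔ γ_{(p_1,…,p_s)} in the lattice of finpartitions of Fin p is the one-block partition ⊤. Then the number of functions i : Fin p → Fin n satisfying i(0) = i(p_1) = i(p_1+p_2) = … = i(p_1+…+p_{s−1}) and i ∘ (γ ∘ σ_π⁻¹) = i equals n^{p + 2 − s − |π|}, where |π| is the number of blocks of π. -/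
/-!
Let `κ = γ ∘ σ_π⁻¹`. A function satisfying `i ∘ κ = i` is a function on the set of cycles of `κ`,
so everything reduces to two facts about these cycles: there are `p + 1 - |π|` of them, and the `s`
points `0, p_1, p_1 + p_2, …` lie in distinct ones.

Both facts come from one invariant. Call `u` and `v` cut-equivalent if the half-open interval
between them is a union of blocks of `π`. Noncrossingness says that `γ y` and `σ y` are
cut-equivalent for every `y`, hence so are any two points in the same cycle of `κ`.

For the count, the points that are `0` or not the minimum of their block are pairwise not
cut-equivalent. On the other hand each cycle contains such a point: if `u` is the minimum of a
block with maximum `y`, then `κ u = γ y`, which is either `0` or larger than `u`.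

For the distinctness, the interval between two of the points `p_1 + ⋯ + p_k` is a union of blocks of
`γ_{(p_1,…,p_s)}`. If the points were cut-equivalent, it would be a union of blocks of `π` as well,
hence of the join `⊤`, so it would be empty or everything.
-/

open Equiv.Perm (SameCycle)
open Set (Iio Iic Ioo Icc)
open scoped symmDiff

section BlockUnion

variable {α : Type*} [DecidableEq α] {s : Finset α}

/-- The set `S` is saturated with respect to `π`: it contains every block that it meets. For a
partition of `Finset.univ` this says that `S` is a union of blocks. -/
def IsBlockUnion (π : Finpartition s) (S : Set α) : Prop :=
  ∀ B ∈ π.parts, ∀ x ∈ B, ∀ y ∈ B, x ∈ S → y ∈ S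

namespace IsBlockUnion

variable {π : Finpartition s} {S T : Set α}

theorem mem_iff_mem (hS : IsBlockUnion π S) {B : Finset α} (hB : B ∈ π.parts) {x y : α}
    (hx : x ∈ B) (hy : y ∈ B) : x ∈ S ↔ y ∈ S :=
  ⟨hS B hB x hx y hy, hS B hB y hy x hx⟩

theorem compl (hS : IsBlockUnion π S) : IsBlockUnion π Sᶜ :=
  fun B hB x hx y hy hxS hyS => hxS (hS B hB y hy x hx hyS)

theorem symmDiff (hS : IsBlockUnion π S) (hT : IsBlockUnion π T) : IsBlockUnion π (S ∆ T) := by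
  intro B hB x hx y hy
  rw [Set.mem_symmDiff, Set.mem_symmDiff, hS.mem_iff_mem hB hx hy, hT.mem_iff_mem hB hx hy]
  exact id

end IsBlockUnion

/-- Cut-equivalence: `u` and `v` are related if the points lying below exactly one of them are a
union of blocks of `π`. In a linear order these points form the half-open interval between `u` and
`v`, and the symmetric difference treats `u ≤ v` and `v ≤ u` alike. -/
def cutSetoid [Preorder α] (π : Finpartition s) : Setoid α where
  r u v := IsBlockUnion π (Iio u ∆ Iio v)
  iseqv :=
    { refl := fun u => by simp [IsBlockUnion]
      symm := fun h => by rwa [symmDiff_comm]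
      trans := fun {u v w} huv hvw => by
        have huw := huv.symmDiff hvw
        rwa [symmDiff_assoc, symmDiff_symmDiff_cancel_left] at huw }

theorem cutSetoid_iff [Preorder α] {π : Finpartition s} {u v : α} :
    cutSetoid π u v ↔ IsBlockUnion π (Iio u ∆ Iio v) :=
  Iff.rfl

end BlockUnion

section Join

variable {α : Type*} [Fintype α] [DecidableEq α]

theorem rel_of_mem_parts_ofSetoid {r : Setoid α} {_ : DecidableRel r} {B : Finset α}
    (hB : B ∈ (Finpartition.ofSetoid r).parts) {x y : α} (hx : x ∈ B) (hy : y ∈ B) : r x y := by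
  rwa [← Finpartition.mem_part_ofSetoid_iff_rel, Finpartition.part_eq_of_mem _ hB hx]

theorem le_ofSetoid_of_rel {π : Finpartition (Finset.univ : Finset α)} {r : Setoid α}
    [DecidableRel r] (h : ∀ B ∈ π.parts, ∀ x ∈ B, ∀ y ∈ B, r x y) :
    π ≤ Finpartition.ofSetoid r := by
  intro B hB
  obtain ⟨x, hx⟩ := π.nonempty_of_mem_parts hB
  refine ⟨(Finpartition.ofSetoid r).part x, by simp, fun y hy => ?_⟩
  exact Finpartition.mem_part_ofSetoid_iff_rel.2 (h B hB x hx y hy)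

theorem rel_of_top_le_ofSetoid {r : Setoid α} [DecidableRel r]
    (h : ⊤ ≤ Finpartition.ofSetoid r) (x y : α) : r x y := by
  have huniv : (Finset.univ : Finset α) ≠ ⊥ := Finset.ne_empty_of_mem (Finset.mem_univ x)
  obtain ⟨B, hB, hsub⟩ := le_top.trans h (a := Finpartition.indiscrete huniv)
    (Finset.mem_singleton_self Finset.univ)
  exact rel_of_mem_parts_ofSetoid hB (hsub (Finset.mem_univ x)) (hsub (Finset.mem_univ y))

theorem IsBlockUnion.eq_empty_or_eq_univ_of_isLUB_top
    {π ρ : Finpartition (Finset.univ : Finset α)} {S : Set α} (hπ : IsBlockUnion π S)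
    (hρ : IsBlockUnion ρ S) (htop : IsLUB {π, ρ} ⊤) : S = ∅ ∨ S = Set.univ := by
  classical
  have hle {τ : Finpartition (Finset.univ : Finset α)} (hτ : IsBlockUnion τ S) :
      τ ≤ Finpartition.ofSetoid (Setoid.ker (· ∈ S)) :=
    le_ofSetoid_of_rel fun B hB x hx y hy => propext (hτ.mem_iff_mem hB hx hy)
  have hmem : ∀ x y, (x ∈ S) = (y ∈ S) :=
    rel_of_top_le_ofSetoid (htop.2 (by rintro _ (rfl | rfl) <;> exact hle ‹_›))
  rcases S.eq_empty_or_nonempty with hS | ⟨x, hx⟩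
  · exact Or.inl hS
  · exact Or.inr (Set.eq_univ_of_forall fun y => (hmem x y).mp hx)

end Join

theorem eq_of_cutSetoid_of_isLUB_top {α : Type*} [Fintype α] [LinearOrder α]
    {π ρ : Finpartition (Finset.univ : Finset α)} {u v : α} (huv : cutSetoid π u v)
    (hu : IsBlockUnion ρ (Iio u)) (hv : IsBlockUnion ρ (Iio v)) (htop : IsLUB {π, ρ} ⊤) :
    u = v := by
  rcases huv.eq_empty_or_eq_univ_of_isLUB_top (hu.symmDiff hv) htop with hempty | huniv
  · exact Set.Iio_injective (symmDiff_eq_bot.1 hempty)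
  · have hmax : max u v ∈ Iio u ∆ Iio v := huniv ▸ Set.mem_univ _
    simp [Set.mem_symmDiff] at hmax

section Interval

variable {s p : ℕ} (q : Fin s → ℕ)

theorem sum_lt_le_iff_le_intervalIdx (a : Fin s) (x : Fin p) :
    ∑ j with j < a, q j ≤ (x : ℕ) ↔ (a : ℕ) ≤ intervalIdx q x := by
  rw [intervalIdx]
  constructor
  · intro hx
    rw [← Fin.card_Iio a]
    refine Finset.card_le_card fun i hi => ?_
    have hia : i < a := Finset.mem_Iio.1 hi
    rw [Finset.mem_filter_univ]
    refine le_trans (Finset.sum_le_sum_of_subset fun j hj => ?_) hx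
    rw [Finset.mem_filter_univ] at hj ⊢
    exact hj.trans_lt hia
  · contrapose!
    intro hx
    have ha : 0 < (a : ℕ) := by
      by_contra! h
      simp [Fin.lt_def, Nat.le_zero.1 h] at hx
    refine (Nat.le_sub_one_iff_lt ha).1 (le_of_le_of_eq
      (Finset.card_le_card_of_injOn Fin.val ?_ Fin.val_injective.injOn)
      (Finset.card_range ((a : ℕ) - 1)))
    intro i hi
    rw [Finset.mem_coe, Finset.mem_filter_univ] at hi
    rw [Finset.mem_coe, Finset.mem_range]
    by_contra! hai
    refine (hi.trans_lt hx).not_ge (Finset.sum_le_sum_of_subset fun j hj => ?_)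
    rw [Finset.mem_filter_univ] at hj ⊢
    omega

theorem isBlockUnion_intervalPart_Iio {a : Fin s} {u : Fin p}
    (hu : (u : ℕ) = ∑ j with j < a, q j) : IsBlockUnion (intervalPart p q) (Iio u) := by
  intro B hB x hx y hy
  have hxy : intervalIdx q x = intervalIdx q y := by
    unfold intervalPart at hB
    exact rel_of_mem_parts_ofSetoid hB hx hy
  rw [Set.mem_Iio, Set.mem_Iio, Fin.lt_def, Fin.lt_def, hu, ← not_le, ← not_le,
    sum_lt_le_iff_le_intervalIdx, sum_lt_le_iff_le_intervalIdx, hxy]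
  exact id

theorem strictMono_of_val_eq_sum_lt {q : Fin s → ℕ} (hq : ∀ i, 1 ≤ q i) {t : Fin s → Fin p}
    (ht : ∀ a, (t a : ℕ) = ∑ j with j < a, q j) : StrictMono t := by
  intro a b hab
  rw [Fin.lt_def, ht, ht]
  refine Finset.sum_lt_sum_of_subset (i := a) (fun j hj => ?_) (by simpa using hab) (by simp)
    (hq a) fun _ _ _ => Nat.zero_le _
  rw [Finset.mem_filter_univ] at hj ⊢
  exact hj.trans hab

end Interval

section Noncrossing

variable {p : ℕ} {π : Finpartition (Finset.univ : Finset (Fin p))}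

theorem IsNoncrossing.mem_Ioo_of_mem_Ioo (hπ : IsNoncrossing π) {B C : Finset (Fin p)}
    (hB : B ∈ π.parts) (hC : C ∈ π.parts) (hBC : B ≠ C) {a b x y : Fin p} (ha : a ∈ B)
    (hb : b ∈ B) (hx : x ∈ C) (hy : y ∈ C) (hxab : x ∈ Ioo a b) : y ∈ Ioo a b := by
  have hne {z : Fin p} (hz : z ∈ B) : z ≠ y := by
    rintro rfl
    exact hBC (π.eq_of_mem_parts hB hC hz hy)
  constructor
  · refine lt_of_not_ge fun hya => hBC ?_
    exact (hπ y a x b (hya.lt_of_ne' (hne ha)) hxab.1 hxab.2 C hC B hB hy hx ha hb).symm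
  · refine lt_of_not_ge fun hby => hBC ?_
    exact hπ a x b y hxab.1 hxab.2 (hby.lt_of_ne (hne hb)) B hB C hC ha hb hx hy

theorem IsNoncrossing.isBlockUnion_Ioo (hπ : IsNoncrossing π) {B : Finset (Fin p)}
    (hB : B ∈ π.parts) {a b : Fin p} (ha : a ∈ B) (hb : b ∈ B) (hgap : ∀ z ∈ B, z ∉ Ioo a b) :
    IsBlockUnion π (Ioo a b) := by
  intro C hC x hx y hy hxab
  have hBC : B ≠ C := by
    rintro rfl
    exact hgap x hx hxab
  exact hπ.mem_Ioo_of_mem_Ioo hB hC hBC ha hb hx hy hxab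

theorem IsNoncrossing.isBlockUnion_Icc (hπ : IsNoncrossing π) {B : Finset (Fin p)}
    (hB : B ∈ π.parts) {a b : Fin p} (ha : IsLeast (B : Set (Fin p)) a)
    (hb : IsGreatest (B : Set (Fin p)) b) : IsBlockUnion π (Icc a b) := by
  intro C hC x hx y hy hxab
  by_cases hBC : B = C
  · subst hBC
    exact ⟨ha.2 hy, hb.2 hy⟩
  have hne {z : Fin p} (hz : z ∈ B) : z ≠ x := by
    rintro rfl
    exact hBC (π.eq_of_mem_parts hB hC hz hx)
  exact Set.Ioo_subset_Icc_self <| hπ.mem_Ioo_of_mem_Ioo hB hC hBC ha.1 hb.1 hx hy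
    ⟨hxab.1.lt_of_ne (hne ha.1), hxab.2.lt_of_ne' (hne hb.1)⟩

end Noncrossing

section BlockPerm

variable {p : ℕ} {π : Finpartition (Finset.univ : Finset (Fin p))} {σ : Equiv.Perm (Fin p)}

theorem IsBlockPerm.isLeast_apply (hσ : IsBlockPerm π σ) {B : Finset (Fin p)} (hB : B ∈ π.parts)
    {y : Fin p} (hy : IsGreatest (B : Set (Fin p)) y) : IsLeast (B : Set (Fin p)) (σ y) :=
  ⟨(hσ B hB y hy.1).1, (hσ B hB y hy.1).2.2 hy.2⟩

theorem IsBlockPerm.isBlockUnion_Ioo_apply (hσ : IsBlockPerm π σ) (hπ : IsNoncrossing π)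
    {B : Finset (Fin p)} (hB : B ∈ π.parts) {y z : Fin p} (hy : y ∈ B) (hz : z ∈ B)
    (hyz : y < z) : IsBlockUnion π (Ioo y (σ y)) := by
  obtain ⟨hσy, hnext, -⟩ := hσ B hB y hy
  exact hπ.isBlockUnion_Ioo hB hy hσy fun w hw hwmem =>
    ((hnext ⟨z, hz, hyz⟩).2 w hw hwmem.1).not_gt hwmem.2

end BlockPerm

theorem sameCycle_setoid_le_iff {α : Type*} {κ : Equiv.Perm α} {r : Setoid α} :
    SameCycle.setoid κ ≤ r ↔ ∀ x, r (κ x) x := by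
  constructor
  · exact fun h x => h (Equiv.Perm.sameCycle_apply_left.2 (SameCycle.refl κ x))
  · rintro h x _ ⟨k, rfl⟩
    induction k using Int.induction_on with
    | zero => exact r.refl x
    | succ k ih =>
      rw [add_comm, zpow_one_add]
      exact r.trans ih (r.symm (h _))
    | pred k ih =>
      have hstep := h ((κ ^ (-(k : ℤ) - 1)) x)
      rw [← Equiv.Perm.mul_apply, ← zpow_one_add, add_sub_cancel] at hstep
      exact r.trans ih hstep

section Cycles

variable {m : ℕ} {π : Finpartition (Finset.univ : Finset (Fin (m + 1)))}
  {σ : Equiv.Perm (Fin (m + 1))}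

theorem Iio_finRotate_of_ne_last {y : Fin (m + 1)} (hy : y ≠ Fin.last m) :
    Iio (finRotate (m + 1) y) = Iic y := by
  ext x
  rw [Set.mem_Iio, Set.mem_Iic, Fin.lt_def, Fin.le_def, coe_finRotate_of_ne_last hy,
    Nat.lt_succ_iff]

theorem cutSetoid_finRotate_blockPerm (hπ : IsNoncrossing π) (hσ : IsBlockPerm π σ)
    (y : Fin (m + 1)) : cutSetoid π (finRotate (m + 1) y) (σ y) := by
  rw [cutSetoid_iff]
  have hB : π.part y ∈ π.parts := π.part_mem.2 (Finset.mem_univ y)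
  have hyB : y ∈ π.part y := π.mem_part (Finset.mem_univ y)
  by_cases hmax : IsGreatest (π.part y : Set (Fin (m + 1))) y
  · have hmin := hσ.isLeast_apply hB hmax
    have hhull := hπ.isBlockUnion_Icc hB hmin hmax
    by_cases hlast : y = Fin.last m
    · have hset : Iio (finRotate (m + 1) y) ∆ Iio (σ y) = (Icc (σ y) y)ᶜ := by
        subst hlast
        ext x
        simp [Set.mem_symmDiff, Fin.le_last]
      rw [hset]
      exact hhull.compl
    · have hset : Iio (finRotate (m + 1) y) ∆ Iio (σ y) = Icc (σ y) y := by
        have hsub : Iio (σ y) ⊆ Iic y := fun x hx => hx.le.trans (hmin.2 hyB)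
        rw [Iio_finRotate_of_ne_last hlast, symmDiff_of_ge hsub]
        ext x
        simp [and_comm]
      rwa [hset]
  · obtain ⟨z, hz, hyz⟩ : ∃ z ∈ π.part y, y < z := by
      by_contra! h
      exact hmax ⟨hyB, h⟩
    have hlast : y ≠ Fin.last m := Fin.ne_last_of_lt hyz
    have hyσ : y < σ y := ((hσ _ hB y hyB).2.1 ⟨z, hz, hyz⟩).1
    have hset : Iio (finRotate (m + 1) y) ∆ Iio (σ y) = Ioo y (σ y) := by
      have hsub : Iic y ⊆ Iio (σ y) := fun x hx => hx.trans_lt hyσ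
      rw [Iio_finRotate_of_ne_last hlast, symmDiff_of_le hsub]
      ext x
      simp
    rw [hset]
    exact hσ.isBlockUnion_Ioo_apply hπ hB hyB hz hyz

theorem sameCycle_setoid_le_cutSetoid (hπ : IsNoncrossing π) (hσ : IsBlockPerm π σ) :
    SameCycle.setoid (finRotate (m + 1) * σ⁻¹) ≤ cutSetoid π :=
  sameCycle_setoid_le_iff.2 fun x => by
    simpa using cutSetoid_finRotate_blockPerm hπ hσ (σ⁻¹ x)

end Cycles

section BlockMinima

variable {α : Type*} [Fintype α] [LinearOrder α] (π : Finpartition (Finset.univ : Finset α))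

/-- The minima of the blocks of `π`. -/
def blockMinima : Finset α := {x | ∀ y ∈ π.part x, x ≤ y}

variable {π}

theorem mem_blockMinima {x : α} : x ∈ blockMinima π ↔ ∀ y ∈ π.part x, x ≤ y :=
  Finset.mem_filter_univ x

theorem card_blockMinima : (blockMinima π).card = π.parts.card := by
  refine Finset.card_nbij π.part (fun x _ => π.part_mem.2 (Finset.mem_univ x)) ?_ ?_
  · intro x hx y hy (hxy : π.part x = π.part y)
    rw [Finset.mem_coe, mem_blockMinima] at hx hy
    exact le_antisymm (hx y (hxy ▸ π.mem_part (Finset.mem_univ y)))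
      (hy x (hxy ▸ π.mem_part (Finset.mem_univ x)))
  · intro B hB
    have hne := π.nonempty_of_mem_parts hB
    have hpart : π.part (B.min' hne) = B := π.part_eq_of_mem hB (B.min'_mem hne)
    refine ⟨B.min' hne, mem_blockMinima.2 fun y hy => B.min'_le y ?_, hpart⟩
    rwa [hpart] at hy

end BlockMinima

section CycleCount

variable {m : ℕ} {π : Finpartition (Finset.univ : Finset (Fin (m + 1)))}
  {σ : Equiv.Perm (Fin (m + 1))}

variable (π) in
/-- The points that are `0` or not the minimum of their block. Each cycle of `γ ∘ σ_π⁻¹` contains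
exactly one of them when `π` is noncrossing. -/
def cycleReps : Finset (Fin (m + 1)) := insert 0 (blockMinima π)ᶜ

theorem card_cycleReps_add_card_parts : (cycleReps π).card + π.parts.card = m + 2 := by
  have hzero : (0 : Fin (m + 1)) ∉ (blockMinima π)ᶜ := by simp [mem_blockMinima]
  have hcompl := (blockMinima π).card_compl_add_card
  rw [card_blockMinima, Fintype.card_fin] at hcompl
  rw [cycleReps, Finset.card_insert_of_notMem hzero]
  omega

theorem not_cutSetoid_of_mem_cycleReps_of_lt {x y : Fin (m + 1)} (hx : x ∈ cycleReps π)
    (hy : y ∈ cycleReps π) (hlt : x < y) : ¬ cutSetoid π x y := by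
  intro hxy
  have hclosed {u v : Fin (m + 1)} (huv : v ∈ π.part u) : u ∈ Iio x ∆ Iio y ↔ v ∈ Iio x ∆ Iio y :=
    (cutSetoid_iff.1 hxy).mem_iff_mem (π.part_mem.2 (Finset.mem_univ u))
      (π.mem_part (Finset.mem_univ u)) huv
  simp only [cycleReps, Finset.mem_insert, Finset.mem_compl, mem_blockMinima, not_forall,
    not_le] at hx hy
  rcases hx with rfl | ⟨z, hz, hzx⟩
  · obtain ⟨z, hz, hzy⟩ := hy.resolve_left hlt.ne'
    simpa [Set.mem_symmDiff, hzy] using hclosed hz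
  · simpa [Set.mem_symmDiff, hlt, hzx, hzx.trans hlt] using hclosed hz

theorem eq_of_cutSetoid_of_mem_cycleReps {x y : Fin (m + 1)} (hx : x ∈ cycleReps π)
    (hy : y ∈ cycleReps π) (hxy : cutSetoid π x y) : x = y := by
  rcases lt_trichotomy x y with hlt | heq | hgt
  · exact absurd hxy (not_cutSetoid_of_mem_cycleReps_of_lt hx hy hlt)
  · exact heq
  · exact absurd ((cutSetoid π).symm hxy) (not_cutSetoid_of_mem_cycleReps_of_lt hy hx hgt)

theorem exists_mem_cycleReps_sameCycle (hσ : IsBlockPerm π σ) (u : Fin (m + 1)) :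
    ∃ x ∈ cycleReps π, SameCycle (finRotate (m + 1) * σ⁻¹) x u := by
  induction u using WellFoundedGT.induction with
  | _ u ih =>
  by_cases hu : u ∈ blockMinima π
  · have huB : u ∈ π.part u := π.mem_part (Finset.mem_univ u)
    have hmax := (π.part u).isGreatest_max' ⟨u, huB⟩
    set y := (π.part u).max' ⟨u, huB⟩
    have hσy : σ y = u :=
      (hσ.isLeast_apply (π.part_mem.2 (Finset.mem_univ u)) hmax).unique
        ⟨huB, mem_blockMinima.1 hu⟩
    have hstep : (finRotate (m + 1) * σ⁻¹) u = finRotate (m + 1) y := by simp [← hσy]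
    suffices h : ∃ x ∈ cycleReps π, SameCycle (finRotate (m + 1) * σ⁻¹) x (finRotate (m + 1) y) by
      simpa only [← hstep, Equiv.Perm.sameCycle_apply_right] using h
    by_cases hlast : y = Fin.last m
    · rw [hlast, finRotate_last]
      exact ⟨0, Finset.mem_insert_self _ _, SameCycle.refl _ _⟩
    · exact ih _ ((hmax.2 huB).trans_lt ((lt_finRotate_iff_ne_last y).2 hlast))
  · exact ⟨u, Finset.mem_insert_of_mem (Finset.mem_compl.2 hu), SameCycle.refl _ _⟩

theorem card_cycles_add_card_parts (hπ : IsNoncrossing π) (hσ : IsBlockPerm π σ) :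
    Nat.card (Quotient (SameCycle.setoid (finRotate (m + 1) * σ⁻¹))) + π.parts.card = m + 2 := by
  have hbij : Function.Bijective fun x : cycleReps π =>
      (⟦x.1⟧ : Quotient (SameCycle.setoid (finRotate (m + 1) * σ⁻¹))) := by
    constructor
    · intro x y hxy
      exact Subtype.ext <| eq_of_cutSetoid_of_mem_cycleReps x.2 y.2
        (sameCycle_setoid_le_cutSetoid hπ hσ (Quotient.exact hxy))
    · rintro ⟨u⟩
      obtain ⟨x, hx, hxu⟩ := exists_mem_cycleReps_sameCycle hσ u
      exact ⟨⟨x, hx⟩, Quotient.sound hxu⟩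
  rw [← Nat.card_eq_of_bijective _ hbij, Nat.card_eq_finsetCard, card_cycleReps_add_card_parts]

end CycleCount

section FunctionCount

variable {ι α β : Type*}

open Classical in
/-- A function that is constant along a family `t` amounts to its common value on the range of `t`,
recorded at `none`, together with its restriction to the complement of the range. -/
noncomputable def constOnRangeEquiv [Nonempty ι] (t : ι → α) :
    {g : α → β // ∀ a b, g (t a) = g (t b)} ≃ (Option ↥(Set.range t)ᶜ → β) where
  toFun g o := o.elim (g.1 (t (Classical.arbitrary ι))) fun c => g.1 c
  invFun h := ⟨fun c => if hc : c ∈ Set.range t then h none else h (some ⟨c, hc⟩), by simp⟩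
  left_inv := by
    rintro ⟨g, hg⟩
    ext c
    by_cases hc : c ∈ Set.range t
    · obtain ⟨a, rfl⟩ := hc
      simp [hg a (Classical.arbitrary ι)]
    · simp [dif_neg hc]
  right_inv := by
    intro h
    funext o
    cases o with
    | none => simp
    | some c => exact dif_neg c.2

theorem card_constOnRange [Finite α] [Nonempty ι] {t : ι → α} (ht : Function.Injective t) :
    Nat.card {g : α → β // ∀ a b, g (t a) = g (t b)} =
      Nat.card β ^ (Nat.card α + 1 - Nat.card ι) := by
  have hcompl : Nat.card ι + Nat.card ↥(Set.range t)ᶜ = Nat.card α := by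
    rw [← Nat.card_range_of_injective ht, Nat.card_coe_set_eq, Nat.card_coe_set_eq,
      Set.ncard_add_ncard_compl]
  rw [Nat.card_congr (constOnRangeEquiv t), Nat.card_fun, Finite.card_option, ← hcompl,
    Nat.add_assoc, Nat.add_sub_cancel_left]

theorem comp_eq_self_iff_sameCycle_setoid_le_ker {κ : Equiv.Perm α} {i : α → β} :
    i ∘ κ = i ↔ SameCycle.setoid κ ≤ Setoid.ker i :=
  funext_iff.trans (sameCycle_setoid_le_iff (r := Setoid.ker i)).symm

theorem card_constOnRange_and_comp_eq_self [Finite α] [Nonempty ι] {κ : Equiv.Perm α} {t : ι → α}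
    (ht : ∀ a b, SameCycle κ (t a) (t b) → a = b) :
    Nat.card {i : α → β // (∀ a b, i (t a) = i (t b)) ∧ i ∘ κ = i} =
      Nat.card β ^ (Nat.card (Quotient (SameCycle.setoid κ)) + 1 - Nat.card ι) := by
  have hinj : Function.Injective fun a => (⟦t a⟧ : Quotient (SameCycle.setoid κ)) :=
    fun a b hab => ht a b (Quotient.exact hab)
  rw [← card_constOnRange hinj]
  refine Nat.card_congr ?_
  calc {i : α → β // (∀ a b, i (t a) = i (t b)) ∧ i ∘ κ = i}
      ≃ {i : α → β // SameCycle.setoid κ ≤ Setoid.ker i ∧ ∀ a b, i (t a) = i (t b)} :=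
        Equiv.subtypeEquivRight fun i => by
          rw [and_comm, comp_eq_self_iff_sameCycle_setoid_le_ker]
    _ ≃ {i : {i : α → β // SameCycle.setoid κ ≤ Setoid.ker i} // ∀ a b, i.1 (t a) = i.1 (t b)} :=
        (Equiv.subtypeSubtypeEquivSubtypeInter _ fun i : α → β => ∀ a b, i (t a) = i (t b)).symm
    _ ≃ {g : Quotient (SameCycle.setoid κ) → β // ∀ a b, g ⟦t a⟧ = g ⟦t b⟧} :=
        (Setoid.liftEquiv (SameCycle.setoid κ)).subtypeEquiv fun _ => Iff.rfl

end FunctionCount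

theorem card_functions_fixed_by_kreweras (s p n : ℕ) (hs : 1 ≤ s) (hn : 1 ≤ n)
    (q : Fin s → ℕ) (hq : ∀ i, 1 ≤ q i) (hsum : ∑ i, q i = p)
    (π : Finpartition (Finset.univ : Finset (Fin p))) (hπ : IsNoncrossing π)
    (σ : Equiv.Perm (Fin p)) (hσ : IsBlockPerm π σ)
    (t : Fin s → Fin p)
    (ht : ∀ a : Fin s, (t a : ℕ) = ∑ j ∈ Finset.univ.filter fun j : Fin s => j < a, q j)
    (htop : IsLUB ({π, intervalPart p q} : Set (Finpartition (Finset.univ : Finset (Fin p)))) ⊤) :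
    Nat.card {i : Fin p → Fin n //
        (∀ a b : Fin s, i (t a) = i (t b)) ∧ i ∘ (finRotate p * σ⁻¹) = i} =
      n ^ (p + 2 - s - π.parts.card) := by
  have : Nonempty (Fin s) := ⟨⟨0, hs⟩⟩
  obtain ⟨m, rfl⟩ : ∃ m, p = m + 1 := Nat.exists_eq_succ_of_ne_zero (t ⟨0, hs⟩).neZero.ne
  have hcycles := card_cycles_add_card_parts hπ hσ
  have hdistinct : ∀ a b, SameCycle (finRotate (m + 1) * σ⁻¹) (t a) (t b) → a = b := by
    intro a b hab
    refine (strictMono_of_val_eq_sum_lt hq ht).injective ?_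
    exact eq_of_cutSetoid_of_isLUB_top (sameCycle_setoid_le_cutSetoid hπ hσ hab)
      (isBlockUnion_intervalPart_Iio q (ht a)) (isBlockUnion_intervalPart_Iio q (ht b)) htop
  rw [card_constOnRange_and_comp_eq_self hdistinct, Nat.card_fin, Nat.card_fin]
  congr 1
  omega
end

section
/- Let q ≥ 1 and let ε : Fin 2q → Fin 2 be the function taking the value 0 on {0,…,q−1} and the value 1 on {q,…,2q−1}. Then there is exactly one ε-adapted noncrossing finpartition of Fin 2q, namely the pair partition ρ whose blocks are the pairs {j, 2q−1−j} for 0 ≤ j ≤ q−1; moreover ρ satisfies ρ ⊔ γ_{(q,q)} = ⊤ in the lattice of finpartitions of Fin 2q. -/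
/-- A finpartition `π` of `Fin p` is adapted to a labelling `ε : Fin p → Fin 2` if every
block has even cardinality and any two consecutive elements of a block (in increasing
order) carry distinct labels. -/
def IsAdapted {p : ℕ} (ε : Fin p → Fin 2)
    (π : Finpartition (Finset.univ : Finset (Fin p))) : Prop :=
  ∀ B ∈ π.parts, Even B.card ∧
    ∀ x ∈ B, ∀ y ∈ B, (x < y ∧ ∀ z ∈ B, x < z → y ≤ z) → ε x ≠ ε y

/-- The "rainbow" pair partition of `Fin (2q)`, whose blocks are the pairs
`{j, 2q - 1 - j}` for `0 ≤ j ≤ q - 1`. -/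
def rainbowPart (q : ℕ) : Finpartition (Finset.univ : Finset (Fin (2 * q))) :=
  letI f : Fin (2 * q) → ℕ := fun k => min (k : ℕ) (2 * q - 1 - (k : ℕ))
  letI : DecidableRel ⇑(Setoid.ker f) := fun x y =>
    inferInstanceAs (Decidable (f x = f y))
  Finpartition.ofSetoid (Setoid.ker f)

/-!
Let `ε` be monotone. Then `ε` is injective on each block of an `ε`-adapted partition: if `x < y` lie
in one block with the same label, so do `x` and its successor in the block. As there are only two
labels and blocks are even, every block is a pair, and `x` has a partner `σ x` of the other label.
If `π` is moreover noncrossing, then `σ` is strictly decreasing, and the only strictly decreasing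
self-map of `Fin p` is `Fin.rev`. Hence the blocks of `π` are the pairs `{x, x.rev}`. Each of these
pairs meets the first half of `Fin (2 * q)`, so joining them with the two halves gives `⊤`.
-/

section Finpartition

variable {α : Type*} [DecidableEq α] {s : Finset α} {P Q : Finpartition s}

lemma finpartition_le_iff_part_subset : P ≤ Q ↔ ∀ a ∈ s, P.part a ⊆ Q.part a := by
  constructor
  · intro hPQ a ha
    obtain ⟨C, hC, hPC⟩ := hPQ (P.part_mem.2 ha)
    rwa [Q.part_eq_of_mem hC (hPC (P.mem_part ha))]
  · intro hPQ B hB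
    obtain ⟨a, ha, rfl⟩ := P.part_surjOn hB
    exact ⟨Q.part a, Q.part_mem.2 ha, hPQ a ha⟩

lemma finpartition_ext_part (h : ∀ a ∈ s, P.part a = Q.part a) : P = Q :=
  le_antisymm (finpartition_le_iff_part_subset.2 fun a ha => (h a ha).subset)
    (finpartition_le_iff_part_subset.2 fun a ha => (h a ha).symm.subset)

lemma finpartition_forall_mem_parts_iff {p : Finset α → Prop} :
    (∀ B ∈ P.parts, p B) ↔ ∀ a ∈ s, p (P.part a) := by
  refine ⟨fun h a ha => h _ (P.part_mem.2 ha), fun h B hB => ?_⟩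
  obtain ⟨a, ha, rfl⟩ := P.part_surjOn hB
  exact h a ha

lemma finpartition_isLUB_pair_top_of_forall_exists [Decidable (s = ⊥)] {a₀ : α}
    (h : ∀ a ∈ s, ∃ b ∈ P.part a, a₀ ∈ Q.part b) : IsLUB {P, Q} (⊤ : Finpartition s) := by
  refine ⟨fun _ _ => le_top, fun R hR => ?_⟩
  have hPR : P ≤ R := hR (Set.mem_insert P {Q})
  have hQR : Q ≤ R := hR (Set.mem_insert_of_mem P rfl)
  have part_eq : ∀ a ∈ s, R.part a = R.part a₀ := by
    intro a ha
    obtain ⟨b, hab, hb₀⟩ := h a ha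
    have hb : b ∈ s := P.part_subset a hab
    have hRab : b ∈ R.part a := finpartition_le_iff_part_subset.1 hPR a ha hab
    have hRb₀ : a₀ ∈ R.part b := finpartition_le_iff_part_subset.1 hQR b hb hb₀
    rw [R.part_eq_of_mem (R.part_mem.2 hb) hRb₀, R.part_eq_of_mem (R.part_mem.2 ha) hRab]
  refine finpartition_le_iff_part_subset.2 fun a ha b hb => ?_
  have hbs : b ∈ s := Finpartition.part_subset _ a hb
  rw [part_eq a ha, ← part_eq b hbs]
  exact R.mem_part hbs

end Finpartition

lemma eq_rev_of_strictAnti {p : ℕ} {σ : Fin p → Fin p} (hσ : StrictAnti σ) : σ = Fin.rev := by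
  have rev_comp_eq_id : Fin.rev ∘ σ = id := (Fin.rev_strictAnti.comp hσ).eq_id
  exact funext fun x => Fin.rev_eq_iff.1 (congrFun rev_comp_eq_id x)

section Blocks

variable {p : ℕ} {ε : Fin p → Fin 2} {π : Finpartition (Finset.univ : Finset (Fin p))}

lemma isNoncrossing_iff_part :
    IsNoncrossing π ↔ ∀ a b c d : Fin p, a < b → b < c → c < d →
      c ∈ π.part a → d ∈ π.part b → π.part a = π.part b := by
  have mem_self (x : Fin p) : x ∈ π.part x := π.mem_part (Finset.mem_univ x)
  have part_mem (x : Fin p) : π.part x ∈ π.parts := π.part_mem.2 (Finset.mem_univ x)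
  constructor
  · intro hπ a b c d hab hbc hcd hc hd
    exact hπ a b c d hab hbc hcd _ (part_mem a) _ (part_mem b) (mem_self a) hc (mem_self b) hd
  · intro hπ a b c d hab hbc hcd B hB B' hB' haB hcB hbB' hdB'
    obtain rfl := π.part_eq_of_mem hB haB
    obtain rfl := π.part_eq_of_mem hB' hbB'
    exact hπ a b c d hab hbc hcd hcB hdB'

namespace IsAdapted

lemma injOn_of_monotone (hπ : IsAdapted ε π) (hε : Monotone ε) {B : Finset (Fin p)}
    (hB : B ∈ π.parts) : Set.InjOn ε B := by
  have label_ne_of_lt : ∀ x ∈ B, ∀ y ∈ B, x < y → ε x ≠ ε y := by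
    intro x hx y hy hxy hεxy
    obtain ⟨m, hm, hm_min⟩ :=
      (B.filter (x < ·)).exists_min_image id ⟨y, Finset.mem_filter.2 ⟨hy, hxy⟩⟩
    obtain ⟨hmB, hxm⟩ := Finset.mem_filter.1 hm
    have hm_le : ∀ z ∈ B, x < z → m ≤ z := fun z hz hxz =>
      hm_min z (Finset.mem_filter.2 ⟨hz, hxz⟩)
    have hεxm : ε x = ε m := le_antisymm (hε hxm.le) (hεxy ▸ hε (hm_le y hy hxy))
    exact (hπ B hB).2 x hx m hmB ⟨hxm, hm_le⟩ hεxm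
  intro x hx y hy hεxy
  rcases lt_trichotomy x y with hlt | heq | hgt
  · exact absurd hεxy (label_ne_of_lt x hx y hy hlt)
  · exact heq
  · exact absurd hεxy.symm (label_ne_of_lt y hy x hx hgt)

lemma card_eq_two_of_monotone (hπ : IsAdapted ε π) (hε : Monotone ε) {B : Finset (Fin p)}
    (hB : B ∈ π.parts) : B.card = 2 := by
  have card_le : B.card ≤ 2 := by
    simpa using Finset.card_le_card_of_injOn ε (fun x _ => Finset.mem_univ (ε x))
      (hπ.injOn_of_monotone hε hB)
  have card_pos : 0 < B.card := (π.nonempty_of_mem_parts hB).card_pos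
  obtain ⟨k, hk⟩ := (hπ B hB).1
  lia

lemma exists_part_eq_pair (hπ : IsAdapted ε π) (hε : Monotone ε) (x : Fin p) :
    ∃ y, π.part x = {x, y} ∧ ε x ≠ ε y := by
  have hB : π.part x ∈ π.parts := π.part_mem.2 (Finset.mem_univ x)
  have hx : x ∈ π.part x := π.mem_part (Finset.mem_univ x)
  obtain ⟨y, hxy, hpart⟩ : ∃ y, x ≠ y ∧ π.part x = {x, y} := by
    obtain ⟨u, v, huv, hpart⟩ := Finset.card_eq_two.1 (hπ.card_eq_two_of_monotone hε hB)
    rw [hpart, Finset.mem_insert, Finset.mem_singleton] at hx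
    rcases hx with rfl | rfl
    · exact ⟨v, huv, hpart⟩
    · exact ⟨u, huv.symm, hpart.trans (Finset.pair_comm u x)⟩
  have hy : y ∈ π.part x := by simp [hpart]
  exact ⟨y, hpart, (hπ.injOn_of_monotone hε hB).ne hx hy hxy⟩

lemma strictAnti_partner (hπ : IsAdapted ε π) (hnc : IsNoncrossing π) (hε : Monotone ε)
    {σ : Fin p → Fin p} (hσ : ∀ x, π.part x = {x, σ x}) (hεσ : ∀ x, ε x ≠ ε (σ x)) :
    StrictAnti σ := by
  intro x y hxy
  have mem_self (z : Fin p) : z ∈ π.part z := π.mem_part (Finset.mem_univ z)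
  have partner_mem (z : Fin p) : σ z ∈ π.part z := by simp [hσ]
  have part_partner (z : Fin p) : π.part (σ z) = π.part z :=
    π.part_eq_of_mem (π.part_mem.2 (Finset.mem_univ z)) (partner_mem z)
  have mem_partner (z : Fin p) : z ∈ π.part (σ z) := part_partner z ▸ mem_self z
  rcases (hε hxy.le).lt_or_eq with hεxy | hεxy
  · have := hεσ x
    have := hεσ y
    exact hε.reflect_lt (by lia)
  · have part_ne : π.part x ≠ π.part y := fun h =>
      hxy.ne (hπ.injOn_of_monotone hε (π.part_mem.2 (Finset.mem_univ y)) (h ▸ mem_self x)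
        (mem_self y) hεxy)
    by_contra! hle
    have hlt : σ x < σ y := hle.lt_of_ne fun h =>
      part_ne (by rw [← part_partner x, h, part_partner y])
    rw [isNoncrossing_iff_part] at hnc
    rcases (hεσ y).lt_or_gt with hεy | hεy
    · have hyσx : y < σ x := hε.reflect_lt (by have := hεσ x; lia)
      exact part_ne (hnc x y (σ x) (σ y) hxy hyσx hlt (partner_mem x) (partner_mem y))
    · have hσyx : σ y < x := hε.reflect_lt (hεxy ▸ hεy)
      apply part_ne
      rw [← part_partner x, ← part_partner y]
      exact hnc (σ x) (σ y) x y hlt hσyx hxy (mem_partner x) (mem_partner y)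

theorem part_eq_pair_rev (hπ : IsAdapted ε π) (hnc : IsNoncrossing π) (hε : Monotone ε)
    (x : Fin p) : π.part x = {x, x.rev} := by
  choose σ hσ hεσ using hπ.exists_part_eq_pair hε
  rw [hσ, eq_rev_of_strictAnti (hπ.strictAnti_partner hnc hε hσ hεσ)]

end IsAdapted

end Blocks

section Rainbow

variable {q : ℕ}

lemma part_rainbowPart (x : Fin (2 * q)) : (rainbowPart q).part x = {x, x.rev} := by
  ext y
  simp only [rainbowPart, Finpartition.mem_part_ofSetoid_iff_rel, Setoid.ker_def,
    Finset.mem_insert, Finset.mem_singleton, Fin.ext_iff, Fin.val_rev]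
  lia

lemma isNoncrossing_rainbowPart : IsNoncrossing (rainbowPart q) := by
  simp only [isNoncrossing_iff_part, part_rainbowPart, Finset.mem_insert, Finset.mem_singleton]
  intro a b c d hab hbc hcd hc hd
  obtain rfl : c = a.rev := hc.resolve_left (hab.trans hbc).ne'
  obtain rfl : d = b.rev := hd.resolve_left (hbc.trans hcd).ne'
  exact absurd (Fin.rev_lt_rev.1 hcd) hab.not_gt

lemma isAdapted_rainbowPart {ε : Fin (2 * q) → Fin 2} (hε : ∀ x, ε x ≠ ε x.rev) :
    IsAdapted ε (rainbowPart q) := by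
  refine finpartition_forall_mem_parts_iff.2 fun a _ => ?_
  rw [part_rainbowPart]
  refine ⟨?_, fun x hx y hy hxy => ?_⟩
  · rw [Finset.card_pair (ne_of_apply_ne ε (hε a))]
    exact even_two
  · have hne : x ≠ y := hxy.1.ne
    have := hε a
    simp only [Finset.mem_insert, Finset.mem_singleton] at hx hy
    grind

end Rainbow

section Interval

variable {s p : ℕ} {q : Fin s → ℕ}

lemma mem_part_intervalPart {x y : Fin p} :
    y ∈ (intervalPart p q).part x ↔ intervalIdx q x = intervalIdx q y := by
  simp only [intervalPart, Finpartition.mem_part_ofSetoid_iff_rel, Setoid.ker_def]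

lemma intervalIdx_eq_zero_of_lt [NeZero s] {k : Fin p} (hk : (k : ℕ) < q 0) :
    intervalIdx q k = 0 := by
  rw [intervalIdx, Finset.card_eq_zero, Finset.filter_eq_empty_iff]
  intro i _
  have first_le : q 0 ≤ ∑ j ∈ Finset.univ.filter fun j : Fin s => j ≤ i, q j :=
    Finset.single_le_sum (fun _ _ => Nat.zero_le _) (by simp)
  exact (hk.trans_le first_le).not_ge

end Interval

lemma isLUB_rainbowPart_intervalPart {q : ℕ} (hq : 1 ≤ q) :
    IsLUB {rainbowPart q, intervalPart (2 * q) (fun _ : Fin 2 => q)} ⊤ := by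
  let zero : Fin (2 * q) := ⟨0, by lia⟩
  have zero_mem_part {x : Fin (2 * q)} (hx : (x : ℕ) < q) :
      zero ∈ (intervalPart (2 * q) (fun _ : Fin 2 => q)).part x := by
    rw [mem_part_intervalPart, intervalIdx_eq_zero_of_lt hx, intervalIdx_eq_zero_of_lt hq]
  refine finpartition_isLUB_pair_top_of_forall_exists (a₀ := zero) fun x _ => ?_
  rw [part_rainbowPart]
  rcases lt_or_ge (x : ℕ) q with hx | hx
  · exact ⟨x, by simp, zero_mem_part hx⟩
  · exact ⟨x.rev, by simp, zero_mem_part (by rw [Fin.val_rev]; lia)⟩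

theorem rainbow_unique_adapted_noncrossing (q : ℕ) (hq : 1 ≤ q)
    (ε : Fin (2 * q) → Fin 2)
    (hε : ∀ k : Fin (2 * q), ε k = if (k : ℕ) < q then 0 else 1) :
    (∀ π : Finpartition (Finset.univ : Finset (Fin (2 * q))),
      (IsNoncrossing π ∧ IsAdapted ε π) ↔ π = rainbowPart q) ∧
    IsLUB ({rainbowPart q, intervalPart (2 * q) (fun _ : Fin 2 => q)} :
      Set (Finpartition (Finset.univ : Finset (Fin (2 * q))))) ⊤ := by
  have hmono : Monotone ε := by
    intro x y hxy
    rw [hε, hε]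
    grind
  have hrev (x : Fin (2 * q)) : ε x ≠ ε x.rev := by
    rw [hε, hε, Fin.val_rev]
    grind
  refine ⟨fun π => ⟨?_, ?_⟩, isLUB_rainbowPart_intervalPart hq⟩
  · rintro ⟨hnc, hadapted⟩
    refine finpartition_ext_part fun x _ => ?_
    rw [hadapted.part_eq_pair_rev hnc hmono, part_rainbowPart]
  · rintro rfl
    exact ⟨isNoncrossing_rainbowPart, isAdapted_rainbowPart hrev⟩
end
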